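/- arXiv:2311.09964 — 2 statements merged into one kernel-verified Lean document; each statement's English description precedes it below -/
import Mathlib

section
/- (Sup-norm Morrey bound via Choquet integrals) Let $n\ge2$, $\delta\in(0,n]$, and $p\in(\delta,\infty)$. There is a constant $c=c(\delta,n,p)$ such that for every $u\in C^1(\mathbb{R}^n)$, $\sup_{x\in\mathbb{R}^n}|u(x)| \le c\Big[\Big(\int_{\mathbb{R}^n}|u(y)|^p\,d\mathcal{H}^{\delta}_\infty\Big)^{1/p} + \Big(\int_{\mathbb{R}^n}|\nabla u(y)|^p\,d\mathcal{H}^{\delta}_\infty\Big)^{1/p}\Big]$. -/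
open MeasureTheory Metric Set ENNReal

/-- δ-dimensional Hausdorff content via countable ball coverings. -/
noncomputable def hc (n : ℕ) (δ : ℝ) (E : Set (EuclideanSpace ℝ (Fin n))) : ℝ≥0∞ :=
  ⨅ (c : ℕ → EuclideanSpace ℝ (Fin n)) (r : ℕ → ℝ) (_ : ∀ i, 0 < r i)
    (_ : E ⊆ ⋃ i, ball (c i) (r i)), ∑' i, ENNReal.ofReal (r i ^ δ)

/-- Choquet integral of a nonnegative function over Ω with respect to `hc n δ`. -/
noncomputable def choquet (n : ℕ) (δ : ℝ) (Ω : Set (EuclideanSpace ℝ (Fin n)))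
    (f : EuclideanSpace ℝ (Fin n) → ℝ≥0∞) : ℝ≥0∞ :=
  ∫⁻ t in Ioi (0:ℝ), hc n δ {x | x ∈ Ω ∧ ENNReal.ofReal t < f x}

/-- An `ℓ^θ` sum of nonnegative terms is dominated by the `θ`-th power of their sum, `1 ≤ θ`. -/
lemma tsum_rpow_le_rpow_tsum {ι : Type*} (a : ι → ℝ≥0∞) {θ : ℝ} (hθ : 1 ≤ θ) :
    ∑' i, a i ^ θ ≤ (∑' i, a i) ^ θ := by
  have key : ∀ b : ℝ≥0∞, b ^ θ = b * b ^ (θ - 1) := fun b => by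
    conv_lhs => rw [show θ = 1 + (θ - 1) by ring]
    rw [ENNReal.rpow_add_of_nonneg _ _ zero_le_one (by linarith), ENNReal.rpow_one]
  rw [key (∑' i, a i), ← ENNReal.tsum_mul_right]
  refine ENNReal.tsum_le_tsum fun i => ?_
  rw [key]
  gcongr
  exact ENNReal.le_tsum i

/-- Lebesgue measure is controlled by a power of the Hausdorff content. -/
lemma volume_rpow_le_hc {n : ℕ} (hn : 0 < n) {δ : ℝ} (hδ : 0 < δ) (hδn : δ ≤ n)
    (E : Set (EuclideanSpace ℝ (Fin n))) :
    (volume E / volume (ball (0 : EuclideanSpace ℝ (Fin n)) 1)) ^ (δ / n) ≤ hc n δ E := by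
  have hn' : (0 : ℝ) < n := by exact_mod_cast hn
  refine le_iInf fun c => le_iInf fun r => le_iInf fun hr => le_iInf fun hE => ?_
  have hθ : 1 ≤ (n : ℝ) / δ := by rwa [le_div_iff₀ hδ, one_mul]
  rw [← inv_div, ENNReal.rpow_inv_le_iff (by positivity)]
  refine ENNReal.div_le_of_le_mul ?_
  calc volume E ≤ ∑' i, volume (ball (c i) (r i)) :=
        (measure_mono hE).trans (measure_iUnion_le _)
    _ = (∑' i, ENNReal.ofReal (r i ^ δ) ^ ((n : ℝ) / δ)) *
          volume (ball (0 : EuclideanSpace ℝ (Fin n)) 1) := by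
        rw [← ENNReal.tsum_mul_right]
        refine tsum_congr fun i => ?_
        rw [Measure.addHaar_ball_of_pos _ _ (hr i), finrank_euclideanSpace_fin,
          ENNReal.ofReal_rpow_of_pos (Real.rpow_pos_of_pos (hr i) _),
          ← Real.rpow_mul (hr i).le, mul_div_cancel₀ _ hδ.ne', Real.rpow_natCast]
    _ ≤ _ := by
        gcongr
        exact tsum_rpow_le_rpow_tsum _ hθ

/-- Chebyshev's inequality for the Choquet integral of a `p`-th power. -/
lemma hc_superlevel_le {n : ℕ} {δ p κ s : ℝ} (hp : 0 < p) (hκ : 0 < κ) (hs : 0 < s)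
    {g : EuclideanSpace ℝ (Fin n) → ℝ}
    (hK : choquet n δ univ (fun y => ENNReal.ofReal (g y ^ p)) ≤ ENNReal.ofReal (κ ^ p)) :
    hc n δ {y | s < g y} ≤ ENNReal.ofReal ((κ / s) ^ p) := by
  have hsp : 0 < s ^ p := by positivity
  have h : hc n δ {y | s < g y} * ENNReal.ofReal (s ^ p) ≤ ENNReal.ofReal (κ ^ p) := by
    refine le_trans ?_ hK
    calc hc n δ {y | s < g y} * ENNReal.ofReal (s ^ p)
        = ∫⁻ _ in Ioc (0 : ℝ) (s ^ p), hc n δ {y | s < g y} := by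
          simp
      _ ≤ ∫⁻ t in Ioc (0 : ℝ) (s ^ p),
            hc n δ {x | x ∈ univ ∧ ENNReal.ofReal t < ENNReal.ofReal (g x ^ p)} := by
          refine setLIntegral_mono' measurableSet_Ioc fun t ht => ?_
          have hsub : {y | s < g y} ⊆
              {x | x ∈ univ ∧ ENNReal.ofReal t < ENNReal.ofReal (g x ^ p)} := fun y hy => by
            have hlt : s ^ p < g y ^ p := Real.rpow_lt_rpow hs.le hy hp
            exact ⟨mem_univ _, (ENNReal.ofReal_lt_ofReal_iff (hsp.trans hlt)).2
              (ht.2.trans_lt hlt)⟩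
          exact iInf_mono fun c => iInf_mono fun r => iInf_mono fun _ =>
            iInf_mono' fun hc => ⟨hsub.trans hc, le_rfl⟩
      _ ≤ _ := lintegral_mono_set Ioc_subset_Ioi_self
  rw [Real.div_rpow hκ.le hs.le, ENNReal.ofReal_div_of_pos hsp,
    ENNReal.le_div_iff_mul_le (Or.inl (by simpa using hsp)) (Or.inl ENNReal.ofReal_ne_top)]
  exact h

/-- A weak-type bound on a finite measure space implies a strong `L¹` bound. -/
lemma lintegral_le_of_weak_bound {α : Type*} [MeasurableSpace α] (μ : Measure α) {g : α → ℝ}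
    (hg : Measurable g) (hg0 : ∀ y, 0 ≤ g y) {q κ : ℝ} (hq : 1 < q) (hκ : 0 < κ) (D : ℝ≥0∞)
    (hw : ∀ s, 0 < s → μ {y | s < g y} ≤ D * ENNReal.ofReal ((κ / s) ^ q)) :
    ∫⁻ y, ENNReal.ofReal (g y) ∂μ ≤
      (μ univ + D * ENNReal.ofReal (1 / (q - 1))) * ENNReal.ofReal κ := by
  rw [lintegral_eq_lintegral_meas_lt μ (.of_forall hg0) hg.aemeasurable,
    ← Ioc_union_Ioi_eq_Ioi hκ.le, add_mul]
  refine (lintegral_union_le _ _ _).trans (add_le_add ?_ ?_)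
  · calc ∫⁻ t in Ioc 0 κ, μ {a | t < g a} ≤ ∫⁻ _ in Ioc 0 κ, μ univ :=
          lintegral_mono fun t => measure_mono (subset_univ _)
      _ = _ := by simp
  · calc ∫⁻ t in Ioi κ, μ {a | t < g a}
        ≤ ∫⁻ t in Ioi κ, D * ENNReal.ofReal (κ ^ q * t ^ (-q)) := by
          refine setLIntegral_mono' measurableSet_Ioi fun t ht => ?_
          have ht0 : 0 < t := hκ.trans ht
          rw [Real.rpow_neg ht0.le, ← div_eq_mul_inv, ← Real.div_rpow hκ.le ht0.le]
          exact hw t ht0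
      _ = D * ENNReal.ofReal (∫ t in Ioi κ, κ ^ q * t ^ (-q)) := by
          rw [lintegral_const_mul _ (by fun_prop), ofReal_integral_eq_lintegral_ofReal]
          · exact (integrableOn_Ioi_rpow_of_lt (by linarith) hκ).const_mul _
          · filter_upwards [ae_restrict_mem measurableSet_Ioi] with t ht
            have ht0 : 0 < t := hκ.trans ht
            positivity
      _ = D * ENNReal.ofReal (1 / (q - 1)) * ENNReal.ofReal κ := by
          rw [integral_const_mul, integral_Ioi_rpow_of_lt (by linarith) hκ, mul_assoc,
            ← ENNReal.ofReal_mul (by have := sub_pos.2 hq; positivity)]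
          congr 2
          have h1 : q - 1 ≠ 0 := by linarith
          have h2 : -q + 1 ≠ 0 := by linarith
          have h3 : κ ^ q * κ ^ (-q + 1) = κ := by
            rw [← Real.rpow_add hκ]; simp
          rw [mul_div_assoc', mul_neg, h3]
          field_simp
          ring

/-- Mean over the rescaled ball `B(x, t)` of a function with controlled Choquet integral. -/
lemma lintegral_ball_comp_le {n : ℕ} (hn : 0 < n) {δ p : ℝ} (hδ : 0 < δ) (hδn : δ ≤ n)
    (hp : δ < p) {g : EuclideanSpace ℝ (Fin n) → ℝ} (hg : Continuous g) (hg0 : ∀ y, 0 ≤ g y)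
    {κ : ℝ} (hκ : 0 < κ)
    (hK : choquet n δ univ (fun y => ENNReal.ofReal (g y ^ p)) ≤ ENNReal.ofReal (κ ^ p))
    (x : EuclideanSpace ℝ (Fin n)) {t : ℝ} (ht : 0 < t) :
    ∫⁻ z in ball (0 : EuclideanSpace ℝ (Fin n)) 1, ENNReal.ofReal (g (x + t • z)) ≤
      (volume (ball (0 : EuclideanSpace ℝ (Fin n)) 1) *
        (1 + ENNReal.ofReal (1 / (p * n / δ - 1)))) *
        (ENNReal.ofReal κ * ENNReal.ofReal (t ^ (-(δ / p)))) := by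
  have hn' : (0 : ℝ) < n := by exact_mod_cast hn
  have hp0 : 0 < p := hδ.trans hp
  have hq : 1 < p * n / δ := by
    rw [one_lt_div hδ]
    have : (1 : ℝ) ≤ n := by exact_mod_cast hn
    nlinarith
  set ω := volume (ball (0 : EuclideanSpace ℝ (Fin n)) 1) with hω
  have hω0 : ω ≠ 0 := (measure_ball_pos _ _ one_pos).ne'
  have hωt : ω ≠ ⊤ := measure_ball_lt_top.ne
  have hm : Measurable fun z : EuclideanSpace ℝ (Fin n) => g (x + t • z) := by fun_prop
  have main := lintegral_le_of_weak_bound (volume.restrict (ball 0 1)) hm (fun z => hg0 _)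
    hq (κ := κ * t ^ (-(δ / p))) (by positivity) ω ?_
  · rw [Measure.restrict_apply_univ] at main
    refine main.trans_eq ?_
    rw [ENNReal.ofReal_mul hκ.le, mul_add, mul_one]
  intro s hs
  have hvol : volume {y | s < g y} ≤ ω * ENNReal.ofReal ((κ / s) ^ (p * n / δ)) := by
    have h := (volume_rpow_le_hc hn hδ hδn _).trans (hc_superlevel_le hp0 hκ hs hK)
    rw [← inv_div, ENNReal.rpow_inv_le_iff (by positivity), ENNReal.div_le_iff hω0 hωt,
      ENNReal.ofReal_rpow_of_pos (by positivity), ← Real.rpow_mul (by positivity),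
      mul_div_assoc', mul_comm] at h
    exact h
  calc (volume.restrict (ball 0 1)) {z | s < g (x + t • z)}
      ≤ volume {z | s < g (x + t • z)} := Measure.restrict_apply_le _ _
    _ = volume ((fun z => t • z) ⁻¹' ((fun y => x + y) ⁻¹' {y | s < g y})) := rfl
    _ = ENNReal.ofReal ((t ^ n)⁻¹) * volume {y | s < g y} := by
        rw [Measure.addHaar_preimage_smul _ ht.ne', measure_preimage_add,
          finrank_euclideanSpace_fin, abs_of_pos (by positivity)]
    _ ≤ ENNReal.ofReal ((t ^ n)⁻¹) * (ω * ENNReal.ofReal ((κ / s) ^ (p * n / δ))) := by gcongr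
    _ = ω * ENNReal.ofReal ((κ * t ^ (-(δ / p)) / s) ^ (p * n / δ)) := by
        rw [mul_left_comm, ← ENNReal.ofReal_mul (by positivity)]
        congr 2
        rw [show κ * t ^ (-(δ / p)) / s = t ^ (-(δ / p)) * (κ / s) by ring,
          Real.mul_rpow (by positivity) (by positivity), ← Real.rpow_mul ht.le,
          show -(δ / p) * (p * n / δ) = -(n : ℝ) by field_simp, Real.rpow_neg ht.le,
          Real.rpow_natCast]

/-- Pointwise bound by the value at `x + z` and the gradient along the connecting segment. -/
lemma ofReal_abs_le_add_lintegral {E : Type*} [NormedAddCommGroup E] [NormedSpace ℝ E]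
    {u : E → ℝ} (hu : ContDiff ℝ 1 u) (x z : E) (hz : ‖z‖ ≤ 1) :
    ENNReal.ofReal |u x| ≤ ENNReal.ofReal |u (x + z)| +
      ∫⁻ t in Ioc (0 : ℝ) 1, ENNReal.ofReal ‖fderiv ℝ u (x + t • z)‖ := by
  have hcont : Continuous fun t : ℝ => fderiv ℝ u (x + t • z) z :=
    ((hu.continuous_fderiv one_ne_zero).comp (by fun_prop)).clm_apply continuous_const
  have hd : ∀ t : ℝ, HasDerivAt (fun t : ℝ => u (x + t • z)) (fderiv ℝ u (x + t • z) z) t := by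
    intro t
    have h1 : HasDerivAt (fun t : ℝ => x + t • z) z t := by
      simpa using ((hasDerivAt_id t).smul_const z).const_add x
    exact ((hu.differentiable one_ne_zero) _).hasFDerivAt.comp_hasDerivAt t h1
  have hftc : ∫ t in (0 : ℝ)..1, fderiv ℝ u (x + t • z) z = u (x + z) - u x := by
    rw [intervalIntegral.integral_eq_sub_of_hasDerivAt (fun t _ => hd t)
      (hcont.intervalIntegrable _ _)]
    simp
  have hle : ENNReal.ofReal |u (x + z) - u x| ≤
      ∫⁻ t in Ioc (0 : ℝ) 1, ENNReal.ofReal ‖fderiv ℝ u (x + t • z)‖ := by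
    rw [← hftc, intervalIntegral.integral_of_le zero_le_one, ← Real.norm_eq_abs,
      ofReal_norm]
    refine (enorm_integral_le_lintegral_enorm _).trans (lintegral_mono fun t => ?_)
    rw [← ofReal_norm]
    refine ENNReal.ofReal_le_ofReal (((fderiv ℝ u (x + t • z)).le_opNorm z).trans ?_)
    exact mul_le_of_le_one_right (norm_nonneg _) hz
  refine le_trans ?_ (add_le_add_right hle _)
  rw [← ENNReal.ofReal_add (abs_nonneg _) (abs_nonneg _)]
  refine ENNReal.ofReal_le_ofReal ?_
  have := abs_sub_abs_le_abs_sub (u x) (u (x + z))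
  rw [abs_sub_comm] at this
  linarith

/-- Morrey's bound, in the form where both Choquet integrals are at most `κ ^ p`. -/
lemma ofReal_abs_le_of_choquet_le {n : ℕ} (hn : 0 < n) {δ p : ℝ} (hδ : 0 < δ) (hδn : δ ≤ n)
    (hp : δ < p) {u : EuclideanSpace ℝ (Fin n) → ℝ} (hu : ContDiff ℝ 1 u) {κ : ℝ} (hκ : 0 < κ)
    (hK : choquet n δ univ (fun y => ENNReal.ofReal (|u y| ^ p)) ≤ ENNReal.ofReal (κ ^ p))
    (hK' : choquet n δ univ (fun y => ENNReal.ofReal (‖fderiv ℝ u y‖ ^ p)) ≤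
      ENNReal.ofReal (κ ^ p)) (x : EuclideanSpace ℝ (Fin n)) :
    ENNReal.ofReal |u x| ≤ (1 + ENNReal.ofReal (1 / (p * n / δ - 1))) *
      (1 + ∫⁻ t in Ioc (0 : ℝ) 1, ENNReal.ofReal (t ^ (-(δ / p)))) * ENNReal.ofReal κ := by
  set ω := volume (ball (0 : EuclideanSpace ℝ (Fin n)) 1) with hω
  set A : ℝ≥0∞ := 1 + ENNReal.ofReal (1 / (p * n / δ - 1))
  set J := ∫⁻ t in Ioc (0 : ℝ) 1, ENNReal.ofReal (t ^ (-(δ / p)))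
  have hω0 : ω ≠ 0 := (measure_ball_pos _ _ one_pos).ne'
  have hωt : ω ≠ ⊤ := measure_ball_lt_top.ne
  have hcd : Continuous (fderiv ℝ u) := hu.continuous_fderiv one_ne_zero
  have hcu : Continuous u := hu.continuous
  have hzero : ∫⁻ z in ball (0 : EuclideanSpace ℝ (Fin n)) 1, ENNReal.ofReal |u (x + z)| ≤
      ω * A * ENNReal.ofReal κ := by
    have h := lintegral_ball_comp_le hn hδ hδn hp hcu.abs (fun y => abs_nonneg _) hκ hK x one_pos
    simpa only [one_smul, Real.one_rpow, ENNReal.ofReal_one, mul_one] using h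
  have hone : ∫⁻ z in ball (0 : EuclideanSpace ℝ (Fin n)) 1,
      ∫⁻ t in Ioc (0 : ℝ) 1, ENNReal.ofReal ‖fderiv ℝ u (x + t • z)‖ ≤
      ω * A * ENNReal.ofReal κ * J := by
    rw [lintegral_lintegral_swap (by
      refine (ENNReal.continuous_ofReal.comp ?_).aemeasurable
      fun_prop)]
    rw [← lintegral_const_mul _ (by fun_prop)]
    refine setLIntegral_mono' measurableSet_Ioc fun t ht => ?_
    rw [mul_assoc]
    exact lintegral_ball_comp_le hn hδ hδn hp hcd.norm (fun y => norm_nonneg _) hκ hK' x ht.1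
  have hmul : ω * ENNReal.ofReal |u x| ≤ ω * (A * (1 + J) * ENNReal.ofReal κ) := by
    calc ω * ENNReal.ofReal |u x|
        = ∫⁻ _ in ball (0 : EuclideanSpace ℝ (Fin n)) 1, ENNReal.ofReal |u x| := by
          simp [hω, mul_comm]
      _ ≤ ∫⁻ z in ball (0 : EuclideanSpace ℝ (Fin n)) 1, (ENNReal.ofReal |u (x + z)| +
            ∫⁻ t in Ioc (0 : ℝ) 1, ENNReal.ofReal ‖fderiv ℝ u (x + t • z)‖) := by
          refine setLIntegral_mono' measurableSet_ball fun z hz => ?_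
          exact ofReal_abs_le_add_lintegral hu x z (by simpa using (mem_ball_zero_iff.1 hz).le)
      _ ≤ ω * A * ENNReal.ofReal κ + ω * A * ENNReal.ofReal κ * J := by
          rw [lintegral_add_left (by fun_prop)]
          exact add_le_add hzero hone
      _ = _ := by ring
  exact (ENNReal.mul_le_mul_iff_right hω0 hωt).1 hmul

theorem stmt_9 (n : ℕ) (hn : 2 ≤ n) (δ p : ℝ) (hδ : 0 < δ) (hδn : δ ≤ n) (hp : δ < p) :
    ∃ c : ℝ≥0∞, c ≠ ⊤ ∧
      ∀ u : EuclideanSpace ℝ (Fin n) → ℝ, ContDiff ℝ 1 u →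
        ∀ x : EuclideanSpace ℝ (Fin n),
          ENNReal.ofReal (|u x|) ≤
            c * ((choquet n δ Set.univ (fun y => ENNReal.ofReal (|u y| ^ p))) ^ (1 / p) +
              (choquet n δ Set.univ (fun y => ENNReal.ofReal (‖fderiv ℝ u y‖ ^ p))) ^ (1 / p)) := by
  have hp0 : 0 < p := hδ.trans hp
  have hJ : ∫⁻ t in Ioc (0 : ℝ) 1, ENNReal.ofReal (t ^ (-(δ / p))) ≠ ⊤ := by
    have hint : IntervalIntegrable (fun t : ℝ => t ^ (-(δ / p))) volume 0 1 :=
      intervalIntegral.intervalIntegrable_rpow' (by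
        have := (div_lt_one hp0).2 hp
        linarith)
    exact ((intervalIntegrable_iff_integrableOn_Ioc_of_le zero_le_one).1 hint).lintegral_lt_top.ne
  refine ⟨(1 + ENNReal.ofReal (1 / (p * n / δ - 1))) *
      (1 + ∫⁻ t in Ioc (0 : ℝ) 1, ENNReal.ofReal (t ^ (-(δ / p)))), by finiteness, ?_⟩
  intro u hu x
  set C : ℝ≥0∞ := (1 + ENNReal.ofReal (1 / (p * n / δ - 1))) *
      (1 + ∫⁻ t in Ioc (0 : ℝ) 1, ENNReal.ofReal (t ^ (-(δ / p)))) with hC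
  have hC0 : C ≠ 0 := by simp [hC]
  have hCt : C ≠ ⊤ := by rw [hC]; finiteness
  set K := choquet n δ Set.univ (fun y => ENNReal.ofReal (|u y| ^ p))
  set K' := choquet n δ Set.univ (fun y => ENNReal.ofReal (‖fderiv ℝ u y‖ ^ p))
  rw [mul_comm, ← ENNReal.div_le_iff hC0 hCt]
  refine le_of_forall_gt_imp_ge_of_dense fun b hb => ?_
  rcases eq_or_ne b ⊤ with rfl | hbt
  · exact le_top
  have hκ : 0 < b.toReal := ENNReal.toReal_pos (pos_of_gt hb).ne' hbt
  have hpow : ∀ L : ℝ≥0∞, L ^ (1 / p) ≤ b → L ≤ ENNReal.ofReal (b.toReal ^ p) := fun L hL => by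
    rw [← ENNReal.ofReal_rpow_of_pos hκ, ENNReal.ofReal_toReal hbt]
    rwa [one_div, ENNReal.rpow_inv_le_iff hp0] at hL
  have := ofReal_abs_le_of_choquet_le (by omega) hδ hδn hp hu hκ
    (hpow K (le_self_add.trans hb.le)) (hpow K' (le_add_self.trans hb.le)) x
  rw [ENNReal.ofReal_toReal hbt] at this
  rw [ENNReal.div_le_iff hC0 hCt, mul_comm]
  exact this
end

section
/- (Weak-type estimate at the exponent $\delta/n$ for compactly supported functions) Let $\Omega\subseteq\mathbb{R}^n$ be a bounded domain and $\delta\in(0,n]$. There is a constant $c=c(n,\delta)$ such that for every $u\in C^1_0(\Omega)$ and every $t>0$, $\mathcal{H}^{\delta}_\infty(\{x\in\Omega : |u(x)|>t\})^{(n-1)/\delta} \le \frac{c}{t}\Big(\int_\Omega|\nabla u(x)|^{\delta/n}\,d\mathcal{H}^{\delta}_\infty\Big)^{n/\delta}$. -/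
open MeasureTheory Metric Set ENNReal

section Potential

variable {E : Type*} [NormedAddCommGroup E] [NormedSpace ℝ E]

/-- A compactly supported `C¹` function is controlled by the integral of its gradient along a
ray. -/
lemma enorm_le_lintegral_ray {u : E → ℝ} (hu : ContDiff ℝ 1 u) (hc : HasCompactSupport u)
    (x : E) {v : E} (hv : v ≠ 0) :
    ‖u x‖ₑ ≤ ∫⁻ s in Ioi (0:ℝ), ‖fderiv ℝ u (x + s • v)‖ₑ * ‖v‖ₑ := by
  have hline : Topology.IsClosedEmbedding (fun s : ℝ => x - s • v) := by
    have := (Homeomorph.subLeft x).isClosedEmbedding.comp (isClosedEmbedding_smul_left (𝕜 := ℝ) hv)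
    simpa [Function.comp_def] using this
  have hdiff : ContDiff ℝ 1 (fun s : ℝ => u (x - s • v)) := hu.comp (by fun_prop)
  have h := HasCompactSupport.enorm_le_lintegral_Ici_deriv hdiff
    (hc.comp_isClosedEmbedding hline) 0
  have hmp := (Measure.measurePreserving_neg (volume : Measure ℝ)).setLIntegral_comp_preimage_emb
    (Homeomorph.neg ℝ).measurableEmbedding (fun s => ‖deriv (fun s : ℝ => u (x - s • v)) s‖ₑ)
    (Iic 0)
  rw [← hmp] at h
  simp only [zero_smul, sub_zero, neg_preimage, neg_Iic, neg_zero] at h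
  rw [setLIntegral_congr Ioi_ae_eq_Ici]
  refine h.trans (lintegral_mono fun s => ?_)
  have hd : HasDerivAt (fun s : ℝ => u (x - s • v)) (fderiv ℝ u (x + s • v) (-v)) (-s) := by
    have h1 : HasDerivAt (fun s : ℝ => x - s • v) (-v) (-s) := by
      simpa using ((hasDerivAt_id (-s)).smul_const v).const_sub x
    have h2 : HasFDerivAt u (fderiv ℝ u (x + s • v)) (x - (-s) • v) := by
      rw [neg_smul, sub_neg_eq_add]
      exact (hu.differentiable one_ne_zero _).hasFDerivAt
    exact h2.comp_hasDerivAt (-s) h1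
  rw [hd.deriv]
  simpa using (fderiv ℝ u (x + s • v)).le_opENorm (-v)

variable [FiniteDimensional ℝ E] [Nontrivial E] [MeasurableSpace E] [BorelSpace E]

open Module in
/-- The fraction of the unit ball sent into a given ball by `v ↦ x + s • v`. -/
lemma volume_ball_inter_preimage_le (μ : Measure E) [μ.IsAddHaarMeasure] (x c : E) {r s : ℝ}
    (hr : 0 < r) (hs : 0 < s) :
    μ (ball 0 1 ∩ {v | x + s • v ∈ ball c r}) ≤
      ((if dist x c < 2 * s then ENNReal.ofReal (r ^ finrank ℝ E * s⁻¹ ^ finrank ℝ E) else 0) +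
        if s < r ∧ dist x c < 2 * r then 1 else 0) * μ (ball 0 1) := by
  have hsub : {v : E | x + s • v ∈ ball c r} ⊆ ball (s⁻¹ • (c - x)) (r * s⁻¹) := by
    intro v hv
    simp only [mem_ofPred_eq, mem_ball, dist_eq_norm] at hv ⊢
    have : v - s⁻¹ • (c - x) = s⁻¹ • (x + s • v - c) := by
      simp only [smul_sub, smul_add, smul_smul, inv_mul_cancel₀ hs.ne', one_smul]
      abel
    rw [this, norm_smul, Real.norm_of_nonneg (inv_nonneg.2 hs.le), mul_comm]
    gcongr
  rcases (ball (0:E) 1 ∩ {v | x + s • v ∈ ball c r}).eq_empty_or_nonempty with he | ⟨v, hv1, hv2⟩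
  · rw [he, measure_empty]
    exact zero_le
  have hD : dist x c < s + r := by
    have h1 : dist x (x + s • v) < s := by
      rw [dist_self_add_right, norm_smul, Real.norm_of_nonneg hs.le]
      rw [mem_ball_zero_iff] at hv1
      nlinarith
    have := dist_triangle x (x + s • v) c
    simp only [mem_ofPred_eq, mem_ball] at hv2
    linarith
  rcases lt_or_ge s r with h | h
  · rw [if_pos (⟨h, by linarith⟩ : s < r ∧ dist x c < 2 * r)]
    refine (measure_mono inter_subset_left).trans ?_
    conv_lhs => rw [← one_mul (μ (ball 0 1))]
    gcongr
    exact le_add_self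
  · rw [if_pos (by linarith : dist x c < 2 * s)]
    refine (measure_mono (inter_subset_right.trans hsub)).trans ?_
    rw [Measure.addHaar_ball μ _ (by positivity), mul_pow]
    gcongr
    exact le_self_add

/-- For `d < 2r` the mass of the truncated kernel near the origin is dominated by the mass of the
kernel `r ^ m * s ^ (-m)` over `2r < s < 4r`. -/
lemma lintegral_kernel_le (m : ℕ) {r : ℝ} (hr : 0 < r) (d : ℝ) :
    ∫⁻ s in Ioi (0:ℝ), ((if d < 2 * s then ENNReal.ofReal (r ^ m * s⁻¹ ^ m) else 0) +
        if s < r ∧ d < 2 * r then 1 else 0) ≤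
      ENNReal.ofReal (1 + 4 ^ m) *
        ∫⁻ s in Ioi (0:ℝ), if d < 2 * s then ENNReal.ofReal (r ^ m * s⁻¹ ^ m) else 0 := by
  have hmeas : Measurable fun s : ℝ =>
      if d < 2 * s then ENNReal.ofReal (r ^ m * s⁻¹ ^ m) else 0 := by
    refine Measurable.ite (measurableSet_lt (by fun_prop) (by fun_prop)) (by fun_prop) (by fun_prop)
  rw [lintegral_add_left hmeas, ENNReal.ofReal_add zero_le_one (by positivity), add_mul,
    ENNReal.ofReal_one, one_mul]
  gcongr
  by_cases hd : d < 2 * r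
  swap
  · simp [hd]
  have h1 : ∫⁻ s in Ioi (0:ℝ), (if s < r ∧ d < 2 * r then 1 else 0 : ℝ≥0∞) = ENNReal.ofReal r := by
    have : (fun s : ℝ => (if s < r ∧ d < 2 * r then 1 else 0 : ℝ≥0∞)) = (Iio r).indicator 1 := by
      ext s; simp [hd, indicator]
    rw [this, lintegral_indicator_one measurableSet_Iio, Measure.restrict_apply measurableSet_Iio,
      inter_comm, Ioi_inter_Iio, Real.volume_Ioo, sub_zero]
  have h2 : ENNReal.ofReal ((4 ^ m)⁻¹ * (2 * r)) ≤
      ∫⁻ s in Ioi (0:ℝ), if d < 2 * s then ENNReal.ofReal (r ^ m * s⁻¹ ^ m) else 0 := by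
    calc ENNReal.ofReal ((4 ^ m)⁻¹ * (2 * r))
        = ∫⁻ s in Ioo (2 * r) (4 * r), ENNReal.ofReal ((4 ^ m)⁻¹) := by
          rw [setLIntegral_const, Real.volume_Ioo, ← ENNReal.ofReal_mul (by positivity)]
          ring_nf
      _ ≤ ∫⁻ s in Ioo (2 * r) (4 * r),
            if d < 2 * s then ENNReal.ofReal (r ^ m * s⁻¹ ^ m) else 0 := by
          refine setLIntegral_mono hmeas fun s hs => ?_
          have hs0 : 0 < s := by linarith [hs.1]
          rw [if_pos (by linarith [hs.1])]
          refine ENNReal.ofReal_le_ofReal ?_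
          rw [← mul_pow, ← inv_pow]
          gcongr
          rw [← div_eq_mul_inv, le_div_iff₀ hs0]
          linarith [hs.2]
      _ ≤ _ := lintegral_mono_set fun s hs => by
          simp only [mem_Ioi]; linarith [hs.1]
  rw [h1]
  calc ENNReal.ofReal r ≤ ENNReal.ofReal (4 ^ m) * ENNReal.ofReal ((4 ^ m)⁻¹ * (2 * r)) := by
        rw [← ENNReal.ofReal_mul (by positivity), mul_inv_cancel_left₀ (by positivity)]
        exact ENNReal.ofReal_le_ofReal (by linarith)
    _ ≤ _ := by gcongr

open Module in
/-- If the gradient is dominated by `∑ a i • 1_{B(c i, r i)}`, then `u` is dominated by a Riesz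
potential of the discrete measure with masses `a i * r i ^ m` at the centres. -/
lemma enorm_le_potential {ι : Type*} [Countable ι] {u : E → ℝ} (hu : ContDiff ℝ 1 u)
    (hcs : HasCompactSupport u) {c : ι → E} {r : ι → ℝ} (hr : ∀ i, 0 < r i) {a : ι → ℝ≥0∞}
    (hF : ∀ y, ‖fderiv ℝ u y‖ₑ ≤ ∑' i, (ball (c i) (r i)).indicator (fun _ => a i) y) (x : E) :
    ‖u x‖ₑ ≤ ENNReal.ofReal (1 + 4 ^ finrank ℝ E) * ∫⁻ s in Ioi (0:ℝ),
      ENNReal.ofReal (s⁻¹ ^ finrank ℝ E) *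
        ∑' i, if dist x (c i) < 2 * s then a i * ENNReal.ofReal (r i ^ finrank ℝ E) else 0 := by
  let μ : Measure E := Measure.addHaar
  set m := finrank ℝ E
  set V := μ (ball 0 1)
  have hV0 : V ≠ 0 := (measure_ball_pos μ 0 one_pos).ne'
  have hVt : V ≠ ∞ := measure_ball_lt_top.ne
  have hker : ∀ i, Measurable fun s : ℝ =>
      ((if dist x (c i) < 2 * s then ENNReal.ofReal (r i ^ m * s⁻¹ ^ m) else 0) +
        if s < r i ∧ dist x (c i) < 2 * r i then (1:ℝ≥0∞) else 0) := by
    intro i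
    refine Measurable.add (Measurable.ite (measurableSet_lt (by fun_prop) (by fun_prop))
      (by fun_prop) (by fun_prop)) (Measurable.ite ?_ (by fun_prop) (by fun_prop))
    exact measurableSet_Iio.inter (MeasurableSet.const _)
  have hker' : ∀ i, Measurable fun s : ℝ =>
      if dist x (c i) < 2 * s then ENNReal.ofReal (r i ^ m * s⁻¹ ^ m) else 0 := fun i =>
    Measurable.ite (measurableSet_lt (by fun_prop) (by fun_prop)) (by fun_prop) (by fun_prop)
  have hcont : Continuous fun y => fderiv ℝ u y := hu.continuous_fderiv one_ne_zero
  have key : ‖u x‖ₑ * V ≤ (∫⁻ s in Ioi (0:ℝ), ∑' i, a i *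
      ((if dist x (c i) < 2 * s then ENNReal.ofReal (r i ^ m * s⁻¹ ^ m) else 0) +
        if s < r i ∧ dist x (c i) < 2 * r i then 1 else 0)) * V := by
    calc ‖u x‖ₑ * V = ∫⁻ v in ball (0:E) 1, ‖u x‖ₑ ∂μ := by rw [setLIntegral_const]
      _ ≤ ∫⁻ v in ball (0:E) 1, (∫⁻ s in Ioi (0:ℝ), ‖fderiv ℝ u (x + s • v)‖ₑ) ∂μ := by
          refine lintegral_mono_ae ?_
          rw [ae_restrict_iff' measurableSet_ball]
          filter_upwards [compl_mem_ae_iff.2 (measure_singleton (μ := μ) (0:E))] with v hv hv1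
          refine (enorm_le_lintegral_ray hu hcs x hv).trans (lintegral_mono fun s => ?_)
          refine mul_le_of_le_one_right' ?_
          rw [mem_ball_zero_iff] at hv1
          rw [← ofReal_norm]
          exact ENNReal.ofReal_le_one.2 hv1.le
      _ = ∫⁻ s in Ioi (0:ℝ), ∫⁻ v in ball (0:E) 1, ‖fderiv ℝ u (x + s • v)‖ₑ ∂μ := by
          refine lintegral_lintegral_swap ?_
          refine Measurable.aemeasurable ?_
          refine Continuous.measurable ?_
          simp only [Function.uncurry_def]
          exact (hcont.comp (by fun_prop)).enorm
      _ ≤ ∫⁻ s in Ioi (0:ℝ), (∑' i, a i *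
            ((if dist x (c i) < 2 * s then ENNReal.ofReal (r i ^ m * s⁻¹ ^ m) else 0) +
            if s < r i ∧ dist x (c i) < 2 * r i then 1 else 0)) * V := by
          refine setLIntegral_mono' measurableSet_Ioi fun s hs => ?_
          have hpre : ∀ i, MeasurableSet {v : E | x + s • v ∈ ball (c i) (r i)} := fun i =>
            (isOpen_ball.preimage (by fun_prop : Continuous fun v : E => x + s • v)).measurableSet
          have hind : ∀ i, (fun v : E =>
              (ball (c i) (r i)).indicator (fun _ => a i) (x + s • v)) =
              {v : E | x + s • v ∈ ball (c i) (r i)}.indicator (fun _ => a i) := fun i => rfl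
          calc ∫⁻ v in ball (0:E) 1, ‖fderiv ℝ u (x + s • v)‖ₑ ∂μ
              ≤ ∫⁻ v in ball (0:E) 1,
                  ∑' i, (ball (c i) (r i)).indicator (fun _ => a i) (x + s • v) ∂μ :=
                lintegral_mono fun v => hF _
            _ = ∑' i, a i * μ (ball 0 1 ∩ {v | x + s • v ∈ ball (c i) (r i)}) := by
                rw [lintegral_tsum fun i => by
                  rw [hind]; exact (measurable_const.indicator (hpre i)).aemeasurable]
                congr 1 with i
                rw [hind, lintegral_indicator_const (hpre i), Measure.restrict_apply (hpre i),
                  inter_comm]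
            _ ≤ _ := by
                rw [← ENNReal.tsum_mul_right]
                refine ENNReal.tsum_le_tsum fun i => ?_
                rw [mul_assoc]
                gcongr
                exact volume_ball_inter_preimage_le μ x (c i) (hr i) hs
      _ = _ := lintegral_mul_const' _ _ hVt
  refine ((ENNReal.mul_le_mul_iff_left hV0 hVt).1 key).trans ?_
  rw [lintegral_tsum fun i => ((hker i).const_mul _).aemeasurable]
  have hrhs : ∀ s : ℝ, 0 < s → ENNReal.ofReal (s⁻¹ ^ m) *
      (∑' i, if dist x (c i) < 2 * s then a i * ENNReal.ofReal (r i ^ m) else 0) =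
      ∑' i, a i * if dist x (c i) < 2 * s then ENNReal.ofReal (r i ^ m * s⁻¹ ^ m) else 0 := by
    intro s hs
    rw [← ENNReal.tsum_mul_left]
    congr 1 with i
    split_ifs
    · rw [ENNReal.ofReal_mul (pow_nonneg (hr i).le m)]
      ring
    · simp
  rw [setLIntegral_congr_fun measurableSet_Ioi fun s hs => hrhs s hs,
    lintegral_tsum fun i => ((hker' i).const_mul _).aemeasurable, ← ENNReal.tsum_mul_left]
  refine ENNReal.tsum_le_tsum fun i => ?_
  rw [lintegral_const_mul _ (hker i), lintegral_const_mul _ (hker' i), mul_left_comm]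
  gcongr
  exact lintegral_kernel_le m (hr i) _

end Potential

lemma ENNReal.rpow_tsum_le_tsum_rpow {ι : Type*} (f : ι → ℝ≥0∞) {p : ℝ} (hp : 0 < p)
    (hp1 : p ≤ 1) : (∑' i, f i) ^ p ≤ ∑' i, f i ^ p := by
  have hfin : ∀ s : Finset ι, (∑ i ∈ s, f i) ^ p ≤ ∑ i ∈ s, f i ^ p := fun s =>
    Finset.le_sum_of_subadditive (fun x : ℝ≥0∞ => x ^ p) (ENNReal.zero_rpow_of_pos hp).le
      (fun x y => ENNReal.rpow_add_le_add_rpow x y hp.le hp1) s f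
  refine le_of_tendsto ((ENNReal.continuous_rpow_const.tendsto _).comp
    (ENNReal.summable (f := f)).hasSum) (Filter.Eventually.of_forall fun s => ?_)
  exact (hfin s).trans (ENNReal.sum_le_tsum s)

/-- The Hausdorff content is bounded by the cost of a covering indexed by any countable type. -/
lemma hc_le_tsum {n : ℕ} {δ : ℝ} (hδ : 0 < δ) {ι : Type*} [Countable ι]
    {S : Set (EuclideanSpace ℝ (Fin n))} (c : ι → EuclideanSpace ℝ (Fin n)) {r : ι → ℝ}
    (hr : ∀ i, 0 < r i) (hS : S ⊆ ⋃ i, ball (c i) (r i)) :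
    hc n δ S ≤ ∑' i, ENNReal.ofReal (r i ^ δ) := by
  refine ENNReal.le_of_forall_pos_le_add fun ε hε _ => ?_
  obtain ⟨η, hη, hsum⟩ := ENNReal.exists_pos_sum_of_countable (ENNReal.coe_pos.2 hε).ne' ℕ
  obtain ⟨_⟩ := nonempty_denumerable (ι ⊕ ℕ)
  let e : ℕ ≃ ι ⊕ ℕ := (Denumerable.eqv (ι ⊕ ℕ)).symm
  let c' : ι ⊕ ℕ → EuclideanSpace ℝ (Fin n) := Sum.elim c fun _ => 0
  let r' : ι ⊕ ℕ → ℝ := Sum.elim r fun j => (η j : ℝ) ^ δ⁻¹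
  have hr' : ∀ i, 0 < r' i := by
    rintro (i | j)
    · exact hr i
    · exact Real.rpow_pos_of_pos (hη j) _
  have hS' : S ⊆ ⋃ j, ball (c' (e j)) (r' (e j)) := by
    intro x hx
    obtain ⟨i, hi⟩ := mem_iUnion.1 (hS hx)
    exact mem_iUnion.2 ⟨e.symm (Sum.inl i), by simpa [c', r'] using hi⟩
  calc hc n δ S ≤ ∑' j, ENNReal.ofReal (r' (e j) ^ δ) :=
        iInf₂_le_of_le (c' ∘ e) (r' ∘ e) (iInf₂_le_of_le (fun j => hr' (e j)) hS' le_rfl)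
    _ = ∑' i, ENNReal.ofReal (r' i ^ δ) := e.tsum_eq fun i => ENNReal.ofReal (r' i ^ δ)
    _ = (∑' i, ENNReal.ofReal (r i ^ δ)) + ∑' j, (η j : ℝ≥0∞) := by
        rw [Summable.tsum_sum ENNReal.summable ENNReal.summable]
        congr 2 with j
        simp only [r', Sum.elim_inr]
        rw [Real.rpow_inv_rpow (η j).coe_nonneg hδ.ne', ENNReal.ofReal_coe_nnreal]
    _ ≤ _ := by gcongr

/-- Splitting the Riesz potential at the radius `ρ` at which the two bounds `σ s ^ n` and `N` on
the mass of a ball coincide. -/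
lemma lintegral_potential_le {n : ℕ} (hn : 2 ≤ n) {g : ℝ → ℝ≥0∞} {σ N ρ : ℝ} (hσ : 0 < σ)
    (hρ : 0 < ρ) (hN : σ * ρ ^ n = N) (hg1 : ∀ s, 0 < s → g s ≤ ENNReal.ofReal (σ * s ^ n))
    (hg2 : ∀ s, g s ≤ ENNReal.ofReal N) :
    ∫⁻ s in Ioi (0:ℝ), ENNReal.ofReal (s⁻¹ ^ n) * g s ≤ ENNReal.ofReal (2 * (σ * ρ)) := by
  have hn' : (2:ℝ) ≤ n := by exact_mod_cast hn
  have hN0 : 0 < N := by rw [← hN]; positivity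
  have hlow : ∫⁻ s in Ioc 0 ρ, ENNReal.ofReal (s⁻¹ ^ n) * g s ≤ ENNReal.ofReal (σ * ρ) := by
    calc ∫⁻ s in Ioc 0 ρ, ENNReal.ofReal (s⁻¹ ^ n) * g s
        ≤ ∫⁻ s in Ioc 0 ρ, ENNReal.ofReal σ := by
          refine setLIntegral_mono' measurableSet_Ioc fun s hs => ?_
          have hs0 : 0 < s := hs.1
          calc ENNReal.ofReal (s⁻¹ ^ n) * g s
              ≤ ENNReal.ofReal (s⁻¹ ^ n) * ENNReal.ofReal (σ * s ^ n) := by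
                gcongr; exact hg1 s hs0
            _ = ENNReal.ofReal σ := by
                rw [← ENNReal.ofReal_mul (by positivity)]
                congr 1
                rw [inv_pow]; field_simp
      _ = _ := by
          rw [setLIntegral_const, Real.volume_Ioc, sub_zero, ← ENNReal.ofReal_mul hσ.le]
  have hhigh : ∫⁻ s in Ioi ρ, ENNReal.ofReal (s⁻¹ ^ n) * g s ≤ ENNReal.ofReal (σ * ρ) := by
    have hint := integrableOn_Ioi_rpow_of_lt (a := -(n:ℝ)) (by linarith) hρ
    calc ∫⁻ s in Ioi ρ, ENNReal.ofReal (s⁻¹ ^ n) * g s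
        ≤ ∫⁻ s in Ioi ρ, ENNReal.ofReal N * ENNReal.ofReal (s ^ (-(n:ℝ))) := by
          refine setLIntegral_mono' measurableSet_Ioi fun s hs => ?_
          have hs0 : 0 < s := hρ.trans hs
          rw [Real.rpow_neg hs0.le, Real.rpow_natCast, ← inv_pow, mul_comm]
          gcongr
          exact hg2 s
      _ = ENNReal.ofReal N * ENNReal.ofReal (∫ s in Ioi ρ, s ^ (-(n:ℝ))) := by
          rw [lintegral_const_mul' _ _ ENNReal.ofReal_ne_top,
            ofReal_integral_eq_lintegral_ofReal hint]
          filter_upwards [self_mem_ae_restrict measurableSet_Ioi] with s hs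
          exact Real.rpow_nonneg (hρ.trans hs).le _
      _ ≤ ENNReal.ofReal (σ * ρ) := by
          rw [← ENNReal.ofReal_mul hN0.le, integral_Ioi_rpow_of_lt (by linarith) hρ, ← hN]
          refine ENNReal.ofReal_le_ofReal ?_
          rw [Real.rpow_add hρ, Real.rpow_neg hρ.le, Real.rpow_natCast, Real.rpow_one]
          have : σ * ρ ^ n * (-((ρ ^ n)⁻¹ * ρ) / (-(n:ℝ) + 1)) = σ * ρ / (n - 1) := by
            have h1 : (n:ℝ) - 1 ≠ 0 := by linarith
            have h2 : -(n:ℝ) + 1 ≠ 0 := by linarith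
            field_simp
            ring
          rw [this]
          exact div_le_self (by positivity) (by linarith)
  rw [← Ioc_union_Ioi_eq_Ioi hρ.le, lintegral_union measurableSet_Ioi (Ioc_disjoint_Ioi le_rfl),
    two_mul, ENNReal.ofReal_add (by positivity) (by positivity)]
  exact add_le_add hlow hhigh

/-- Weak-type bound for the content of the set where the maximal function of a discrete measure
is large. -/
lemma hc_le_of_maximal {n : ℕ} (hn : 0 < n) {δ : ℝ} (hδ : 0 < δ) (hδn : δ ≤ n) {ι : Type*}
    (c : ι → EuclideanSpace ℝ (Fin n)) (m : ι → ℝ≥0∞) {σ N : ℝ} (hσ : 0 < σ)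
    (hN : ∑' i, m i ≤ ENNReal.ofReal N) {S : Set (EuclideanSpace ℝ (Fin n))}
    (hS : ∀ x ∈ S, ∃ s : ℝ, 0 < s ∧
      ENNReal.ofReal (σ * s ^ n) < ∑' i, if dist x (c i) < 2 * s then m i else 0) :
    hc n δ S ≤ ENNReal.ofReal (11 ^ δ * σ⁻¹ ^ (δ / n)) * ∑' i, m i ^ (δ / n) := by
  have hn0 : (0:ℝ) < n := by exact_mod_cast hn
  have hp : 0 < δ / n := by positivity
  have hp1 : δ / n ≤ 1 := (div_le_one hn0).2 hδn
  choose! s hs hsm using hS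
  have hbound : ∀ x ∈ S, 2 * s x ≤ 2 * max 1 (N / σ) := by
    intro x hx
    have h1 : ENNReal.ofReal (σ * s x ^ n) < ENNReal.ofReal N := by
      refine (hsm x hx).trans_le (le_trans (ENNReal.tsum_le_tsum fun i => ?_) hN)
      split_ifs
      · exact le_rfl
      · exact zero_le
    have h2 : s x ^ n ≤ N / σ := by
      rw [le_div_iff₀ hσ, mul_comm]
      exact (ENNReal.ofReal_lt_ofReal_iff_of_nonneg
        (mul_nonneg hσ.le (pow_nonneg (hs x hx).le _))).1 h1 |>.le
    gcongr
    rcases le_total (s x) 1 with h | h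
    · exact h.trans (le_max_left _ _)
    · exact (le_self_pow₀ h hn.ne').trans (h2.trans (le_max_right _ _))
  obtain ⟨T, hTS, hdisj, hcov⟩ := Vitali.exists_disjoint_subfamily_covering_enlargement_closedBall
    S id (fun x => 2 * s x) _ hbound 5 (by norm_num)
  have hTc : T.Countable := by
    refine hdisj.countable_of_nonempty_interior fun x hx => ⟨x, ?_⟩
    exact ball_subset_interior_closedBall (mem_ball_self (by linarith [hs x (hTS hx)]))
  have := hTc.to_subtype
  have hcover : S ⊆ ⋃ b : T, ball (b : EuclideanSpace ℝ (Fin n)) (11 * s b) := by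
    intro x hx
    obtain ⟨b, hb, hsub⟩ := hcov x hx
    refine mem_iUnion.2 ⟨⟨b, hb⟩, ?_⟩
    have hx' := hsub (mem_closedBall_self (by linarith [hs x hx]))
    simp only [id, mem_closedBall, mem_ball] at hx' ⊢
    linarith [hs b (hTS hb)]
  refine (hc_le_tsum hδ _ (fun b : T => mul_pos (by norm_num) (hs b (hTS b.2))) hcover).trans ?_
  have hterm : ∀ b : T, ENNReal.ofReal ((11 * s b) ^ δ) ≤ ENNReal.ofReal (11 ^ δ * σ⁻¹ ^ (δ / n)) *
      ∑' i, if dist (b : EuclideanSpace ℝ (Fin n)) (c i) < 2 * s b then m i ^ (δ / n) else 0 := by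
    intro b
    have hsb : 0 < s b := hs b (hTS b.2)
    have h1 : (11 * s b) ^ δ = (11 ^ δ * σ⁻¹ ^ (δ / n)) * (σ * s b ^ n) ^ (δ / n) := by
      rw [Real.mul_rpow (by norm_num) hsb.le, mul_assoc,
        ← Real.mul_rpow (inv_nonneg.2 hσ.le) (by positivity), inv_mul_cancel_left₀ hσ.ne', ← Real.rpow_natCast,
        ← Real.rpow_mul hsb.le, mul_div_cancel₀ _ hn0.ne']
    rw [h1, ENNReal.ofReal_mul (by positivity)]
    gcongr
    rw [← ENNReal.ofReal_rpow_of_nonneg (by positivity) hp.le]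
    refine (ENNReal.rpow_le_rpow (hsm b (hTS b.2)).le hp.le).trans
      ((ENNReal.rpow_tsum_le_tsum_rpow _ hp hp1).trans (ENNReal.tsum_le_tsum fun i => ?_))
    split_ifs
    · exact le_rfl
    · rw [ENNReal.zero_rpow_of_pos hp]
  refine (ENNReal.tsum_le_tsum hterm).trans ?_
  rw [ENNReal.tsum_mul_left, ENNReal.tsum_comm]
  gcongr with i
  by_cases hi : ∃ b : T, dist (b : EuclideanSpace ℝ (Fin n)) (c i) < 2 * s b
  · obtain ⟨b, hb⟩ := hi
    rw [tsum_eq_single b fun b' hb' => if_neg fun h => ?_]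
    · rw [if_pos hb]
    · refine Set.disjoint_left.1 (hdisj b.2 b'.2 fun h => hb' (Subtype.ext h.symm))
        (?_ : c i ∈ _) ?_
      · simpa [dist_comm] using hb.le
      · simpa [dist_comm] using h.le
  · push Not at hi
    simp [fun b : T => (hi b).not_gt]

/-- The superlevel estimate for a function whose gradient is dominated by a weighted sum of
indicators of balls. -/
lemma hc_superlevel_rpow_le {n : ℕ} (hn : 2 ≤ n) {δ : ℝ} (hδ : 0 < δ) (hδn : δ ≤ n) {ι : Type*}
    [Countable ι] {u : EuclideanSpace ℝ (Fin n) → ℝ} (hu : ContDiff ℝ 1 u)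
    (hcs : HasCompactSupport u) {c : ι → EuclideanSpace ℝ (Fin n)} {r : ι → ℝ} (hr : ∀ i, 0 < r i)
    {a : ι → ℝ≥0∞}
    (hF : ∀ y, ‖fderiv ℝ u y‖ₑ ≤ ∑' i, (ball (c i) (r i)).indicator (fun _ => a i) y) {A : ℝ}
    (hA : 0 < A) (hsum : ∑' i, (a i * ENNReal.ofReal (r i ^ n)) ^ (δ / n) ≤ ENNReal.ofReal A)
    {t : ℝ} (ht : 0 < t) :
    hc n δ {x | t < |u x|} ^ ((n - 1 : ℝ) / δ) ≤
      ENNReal.ofReal (11 ^ (n - 1 : ℝ) * (2 * (1 + 4 ^ n)) / t * A ^ (n / δ)) := by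
  have hn2 : (2:ℝ) ≤ n := by exact_mod_cast hn
  have hn0 : (0:ℝ) < n := by linarith
  have hn1 : (0:ℝ) < n - 1 := by linarith
  have hp : 0 < δ / n := by positivity
  have hp1 : δ / n ≤ 1 := (div_le_one hn0).2 hδn
  have : Nonempty (Fin n) := ⟨⟨0, by omega⟩⟩
  set C : ℝ := 1 + 4 ^ n with hC
  have hC0 : 0 < C := by positivity
  set N : ℝ := A ^ (n / δ) with hN
  have hN0 : 0 < N := Real.rpow_pos_of_pos hA _
  set ρ : ℝ := (2 * C * N / t) ^ (n - 1 : ℝ)⁻¹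
  have hρ0 : 0 < ρ := Real.rpow_pos_of_pos (by positivity) _
  have hρn : ρ ^ (n - 1 : ℝ) = 2 * C * N / t := Real.rpow_inv_rpow (by positivity) hn1.ne'
  set σ : ℝ := t / (2 * C * ρ) with hσ
  have hσ0 : 0 < σ := by positivity
  have hσρ : σ * ρ = t / (2 * C) := by rw [hσ]; field_simp
  have hσN : σ * ρ ^ n = N := by
    have : ρ ^ n = ρ * ρ ^ (n - 1 : ℝ) := by
      rw [← Real.rpow_natCast, ← Real.rpow_one_add' hρ0.le (by linarith)]
      ring_nf
    rw [this, ← mul_assoc, hσρ, hρn]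
    field_simp
  have hmass : ∑' i, a i * ENNReal.ofReal (r i ^ n) ≤ ENNReal.ofReal N := by
    have h1 := (ENNReal.rpow_tsum_le_tsum_rpow (fun i => a i * ENNReal.ofReal (r i ^ n))
      hp hp1).trans hsum
    have h2 := (ENNReal.le_rpow_inv_iff hp).2 h1
    rwa [ENNReal.ofReal_rpow_of_pos hA, inv_div] at h2
  have hmax : hc n δ {x | t < |u x|} ≤ ENNReal.ofReal (11 ^ δ * σ⁻¹ ^ (δ / n)) *
      ∑' i, (a i * ENNReal.ofReal (r i ^ n)) ^ (δ / n) := by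
    refine hc_le_of_maximal (by omega) hδ hδn c _ hσ0 hmass fun x hx => ?_
    by_contra! hcon
    have h1 := enorm_le_potential hu hcs hr hF x
    rw [finrank_euclideanSpace_fin] at h1
    have h2 := lintegral_potential_le hn hσ0 hρ0 hσN hcon fun s =>
      (ENNReal.tsum_le_tsum fun i => by split_ifs <;> simp).trans hmass
    have h3 : ‖u x‖ₑ ≤ ENNReal.ofReal t := by
      refine h1.trans ((mul_le_mul_right h2 _).trans ?_)
      rw [← ENNReal.ofReal_mul (by positivity), hσρ]
      refine (ENNReal.ofReal_le_ofReal ?_)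
      rw [← hC]
      exact (by field_simp : C * (2 * (t / (2 * C))) = t).le
    rw [Real.enorm_eq_ofReal_abs, ENNReal.ofReal_le_ofReal_iff ht.le] at h3
    exact absurd (show t < |u x| from hx) h3.not_gt
  have hσpow : σ⁻¹ ^ ((n - 1 : ℝ) / n) = 2 * C / t * A ^ δ⁻¹ := by
    have h1 : σ⁻¹ = 2 * C / t * ρ := by rw [hσ]; field_simp
    have h2 : σ⁻¹ ^ (n - 1 : ℝ) = (2 * C / t) ^ (n:ℝ) * N := by
      rw [h1, Real.mul_rpow (by positivity) hρ0.le, hρn, Real.rpow_sub_one (by positivity)]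
      field_simp
    rw [div_eq_mul_inv, Real.rpow_mul (by positivity), h2, Real.mul_rpow (by positivity) hN0.le,
      Real.rpow_rpow_inv (by positivity) hn0.ne', hN, ← Real.rpow_mul hA.le]
    congr 2
    field_simp
  calc hc n δ {x | t < |u x|} ^ ((n - 1 : ℝ) / δ)
      ≤ (ENNReal.ofReal (11 ^ δ * σ⁻¹ ^ (δ / n)) * ENNReal.ofReal A) ^ ((n - 1 : ℝ) / δ) := by
        refine ENNReal.rpow_le_rpow (hmax.trans ?_) (by positivity)
        gcongr
    _ = ENNReal.ofReal ((11 ^ δ * σ⁻¹ ^ (δ / n) * A) ^ ((n - 1 : ℝ) / δ)) := by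
        rw [← ENNReal.ofReal_mul (by positivity), ENNReal.ofReal_rpow_of_pos (by positivity)]
    _ = _ := by
        congr 1
        rw [Real.mul_rpow (by positivity) hA.le, Real.mul_rpow (by positivity) (by positivity),
          ← Real.rpow_mul (by norm_num), ← Real.rpow_mul (by positivity),
          mul_div_cancel₀ _ hδ.ne',
          show δ / n * ((n - 1 : ℝ) / δ) = (n - 1 : ℝ) / n by field_simp, hσpow,
          hN, show (n:ℝ) / δ = δ⁻¹ + (n - 1 : ℝ) / δ by field_simp; ring, Real.rpow_add hA]
        ring

/-- A dyadic lower sum for the integral of an antitone function. -/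
lemma tsum_zpow_mul_le_lintegral {h : ℝ → ℝ≥0∞} (hh : Antitone h) :
    ∑' k : ℤ, ENNReal.ofReal (2 ^ (k + 1)) * h (2 ^ k) ≤ 4 * ∫⁻ t in Ioi (0:ℝ), h t := by
  have hmono : Monotone fun k : ℤ => (2:ℝ) ^ (k - 1) := fun i j hij =>
    zpow_le_zpow_right₀ one_le_two (by simpa using hij)
  have hdisj := hmono.pairwise_disjoint_on_Ioc_succ
  simp only [Int.succ_eq_succ, Int.succ, add_sub_cancel_right] at hdisj
  calc ∑' k : ℤ, ENNReal.ofReal (2 ^ (k + 1)) * h (2 ^ k)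
      ≤ ∑' k : ℤ, 4 * ∫⁻ t in Ioc ((2:ℝ) ^ (k - 1)) (2 ^ k), h t := by
        refine ENNReal.tsum_le_tsum fun k => ?_
        have hlen : (2:ℝ) ^ k - 2 ^ (k - 1) = 2 ^ (k - 1) := by
          rw [zpow_sub_one₀ two_ne_zero]; ring
        have hlen' : (2:ℝ) ^ (k + 1) = 4 * 2 ^ (k - 1) := by
          rw [zpow_sub_one₀ two_ne_zero, zpow_add_one₀ two_ne_zero]; ring
        calc ENNReal.ofReal (2 ^ (k + 1)) * h (2 ^ k)
            = 4 * ∫⁻ t in Ioc ((2:ℝ) ^ (k - 1)) (2 ^ k), h (2 ^ k) := by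
              rw [setLIntegral_const, Real.volume_Ioc, hlen, hlen',
                ENNReal.ofReal_mul (by norm_num), mul_assoc, mul_comm (h _)]
              norm_num
          _ ≤ _ := by
              gcongr 4 * ?_
              exact setLIntegral_mono' measurableSet_Ioc fun t ht => hh ht.2
    _ = 4 * ∫⁻ t in ⋃ k : ℤ, Ioc ((2:ℝ) ^ (k - 1)) (2 ^ k), h t := by
        rw [ENNReal.tsum_mul_left, lintegral_iUnion (fun _ => measurableSet_Ioc) hdisj]
    _ ≤ _ := by
        gcongr
        exact iUnion_subset fun k t ht => (_root_.zpow_pos two_pos _).trans ht.1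

lemma hc_mono {n : ℕ} {δ : ℝ} {S T : Set (EuclideanSpace ℝ (Fin n))} (hST : S ⊆ T) :
    hc n δ S ≤ hc n δ T :=
  iInf_mono fun _ => iInf_mono fun _ => iInf_mono fun _ =>
    iInf_mono' fun hT => ⟨hST.trans hT, le_rfl⟩

/-- A function with finite Choquet integral of its power `δ / n` is dominated by a sum of weighted
indicators of balls whose weights are controlled by the integral. -/
lemma exists_ball_domination {n : ℕ} (hn : 0 < n) {δ : ℝ} (hδ : 0 < δ)
    {Ω : Set (EuclideanSpace ℝ (Fin n))} {f : EuclideanSpace ℝ (Fin n) → ℝ}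
    (hf : ∀ y, 0 ≤ f y) (hfΩ : ∀ y ∉ Ω, f y = 0) {A : ℝ}
    (hA : 4 * choquet n δ Ω (fun x => ENNReal.ofReal (f x ^ (δ / n))) < ENNReal.ofReal A) :
    ∃ (c : ℤ × ℕ → EuclideanSpace ℝ (Fin n)) (r : ℤ × ℕ → ℝ) (a : ℤ × ℕ → ℝ≥0∞), (∀ i, 0 < r i) ∧
      (∀ y, ENNReal.ofReal (f y) ≤ ∑' i, (ball (c i) (r i)).indicator (fun _ => a i) y) ∧
      ∑' i, (a i * ENNReal.ofReal (r i ^ n)) ^ (δ / n) ≤ ENNReal.ofReal A := by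
  have hn0 : (0:ℝ) < n := by exact_mod_cast hn
  have hp : 0 < δ / n := by positivity
  set h : ℝ → ℝ≥0∞ := fun t =>
    hc n δ {x | x ∈ Ω ∧ ENNReal.ofReal t < ENNReal.ofReal (f x ^ (δ / n))} with hh
  have hanti : Antitone h := fun s t hst =>
    hc_mono fun x hx => ⟨hx.1, (ENNReal.ofReal_le_ofReal hst).trans_lt hx.2⟩
  have hlt : ∑' k : ℤ, ENNReal.ofReal (2 ^ (k + 1)) * h (2 ^ k) < ENNReal.ofReal A :=
    (tsum_zpow_mul_le_lintegral hanti).trans_lt hA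
  have hfin : ∀ k : ℤ, h (2 ^ k) ≠ ∞ := by
    intro k hk
    have h1 := (ENNReal.le_tsum (f := fun k : ℤ => ENNReal.ofReal (2 ^ (k + 1)) * h (2 ^ k))
      k).trans_lt (hlt.trans ENNReal.ofReal_lt_top)
    rw [hk, ENNReal.mul_top (ENNReal.ofReal_pos.2 (by positivity)).ne'] at h1
    exact lt_irrefl _ h1
  obtain ⟨η, hη, hηsum⟩ := ENNReal.exists_pos_tsum_mul_lt_of_countable
    (tsub_pos_of_lt hlt).ne' (fun k : ℤ => ENNReal.ofReal (2 ^ (k + 1)))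
    fun _ => ENNReal.ofReal_ne_top
  have hcov : ∀ k : ℤ, ∃ (c : ℕ → EuclideanSpace ℝ (Fin n)) (r : ℕ → ℝ), (∀ j, 0 < r j) ∧
      {x | x ∈ Ω ∧ ENNReal.ofReal (2 ^ k) < ENNReal.ofReal (f x ^ (δ / n))} ⊆
        ⋃ j, ball (c j) (r j) ∧ ∑' j, ENNReal.ofReal (r j ^ δ) < h (2 ^ k) + η k := by
    intro k
    have h1 : h (2 ^ k) < h (2 ^ k) + η k :=
      ENNReal.lt_add_right (hfin k) (ENNReal.coe_pos.2 (hη k)).ne'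
    conv_lhs at h1 => rw [hh]
    simpa only [hc, iInf_lt_iff, exists_prop] using h1
  choose c r hr hsub hcost using hcov
  refine ⟨fun i => c i.1 i.2, fun i => r i.1 i.2,
    fun i => ENNReal.ofReal (((2:ℝ) ^ (i.1 + 1)) ^ (δ / n)⁻¹), fun i => hr _ _, fun y => ?_, ?_⟩
  · rcases (hf y).eq_or_lt with h0 | h0
    · rw [← h0, ENNReal.ofReal_zero]
      exact zero_le
    have hyΩ : y ∈ Ω := by
      by_contra hy
      exact h0.ne' (hfΩ y hy)
    obtain ⟨k, hk1, hk2⟩ := exists_mem_Ioc_zpow (Real.rpow_pos_of_pos h0 (δ / n)) one_lt_two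
    obtain ⟨j, hj⟩ := mem_iUnion.1 (hsub k ⟨hyΩ,
      (ENNReal.ofReal_lt_ofReal_iff (Real.rpow_pos_of_pos h0 _)).2 hk1⟩)
    refine le_trans ?_ (ENNReal.le_tsum (k, j))
    rw [indicator_of_mem hj]
    exact ENNReal.ofReal_le_ofReal
      ((Real.le_rpow_inv_iff_of_pos h0.le (by positivity) hp).2 hk2)
  · have hterm : ∀ i : ℤ × ℕ, (ENNReal.ofReal (((2:ℝ) ^ (i.1 + 1)) ^ (δ / n)⁻¹) *
        ENNReal.ofReal (r i.1 i.2 ^ n)) ^ (δ / n) =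
        ENNReal.ofReal (2 ^ (i.1 + 1)) * ENNReal.ofReal (r i.1 i.2 ^ δ) := by
      intro i
      have hri := hr i.1 i.2
      rw [ENNReal.mul_rpow_of_nonneg _ _ hp.le, ENNReal.ofReal_rpow_of_pos (by positivity),
        ENNReal.ofReal_rpow_of_pos (by positivity), Real.rpow_inv_rpow (by positivity) hp.ne',
        ← Real.rpow_natCast, ← Real.rpow_mul hri.le, mul_div_cancel₀ _ hn0.ne']
    simp only [hterm]
    rw [ENNReal.tsum_prod']
    simp only [ENNReal.tsum_mul_left]
    calc ∑' k, ENNReal.ofReal (2 ^ (k + 1)) * ∑' j, ENNReal.ofReal (r k j ^ δ)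
        ≤ ∑' k, (ENNReal.ofReal (2 ^ (k + 1)) * h (2 ^ k) + ENNReal.ofReal (2 ^ (k + 1)) * η k) :=
          ENNReal.tsum_le_tsum fun k => by
            rw [← mul_add]
            gcongr
            exact (hcost k).le
      _ ≤ ENNReal.ofReal A := by
          rw [ENNReal.tsum_add]
          exact (add_le_add_right hηsum.le _).trans (add_tsub_cancel_of_le hlt.le).le

theorem stmt_12 (n : ℕ) (hn : 2 ≤ n) (δ : ℝ) (hδ : 0 < δ) (hδn : δ ≤ n) :
    ∃ c : ℝ≥0∞, c ≠ ⊤ ∧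
      ∀ Ω : Set (EuclideanSpace ℝ (Fin n)), IsOpen Ω → IsConnected Ω →
        Bornology.IsBounded Ω →
        ∀ u : EuclideanSpace ℝ (Fin n) → ℝ, ContDiff ℝ 1 u → HasCompactSupport u →
          tsupport u ⊆ Ω → ∀ t : ℝ, 0 < t →
            (hc n δ {x | x ∈ Ω ∧ t < |u x|}) ^ ((n - 1 : ℝ) / δ) ≤
              c / ENNReal.ofReal t *
                (choquet n δ Ω (fun x => ENNReal.ofReal (‖fderiv ℝ u x‖ ^ (δ / n)))) ^ ((n : ℝ) / δ) := by
  have hn2 : (2:ℝ) ≤ n := by exact_mod_cast hn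
  have hn1 : (0:ℝ) < n - 1 := by linarith
  have hq : 0 < (n:ℝ) / δ := div_pos (by linarith) hδ
  set C : ℝ := 11 ^ (n - 1 : ℝ) * (2 * (1 + 4 ^ n)) with hC
  have hC0 : 0 < C := by positivity
  refine ⟨ENNReal.ofReal (C * 4 ^ ((n:ℝ) / δ)), ENNReal.ofReal_ne_top, ?_⟩
  intro Ω _ _ _ u hu hcs hsupp t ht
  set K := choquet n δ Ω (fun x => ENNReal.ofReal (‖fderiv ℝ u x‖ ^ (δ / n))) with hK
  rcases eq_or_ne K ∞ with hKtop | hKtop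
  · rw [hKtop, ENNReal.top_rpow_of_pos hq, ENNReal.mul_top]
    · exact le_top
    · exact ENNReal.div_ne_zero.2
        ⟨(ENNReal.ofReal_pos.2 (by positivity)).ne', ENNReal.ofReal_ne_top⟩
  have hvanish : ∀ y ∉ Ω, ‖fderiv ℝ u y‖ = 0 := fun y hy => by
    rw [image_eq_zero_of_notMem_tsupport fun h => hy (hsupp (tsupport_fderiv_subset ℝ h)),
      norm_zero]
  have hbound : ∀ A : ℝ, 4 * K.toReal < A →
      hc n δ {x | x ∈ Ω ∧ t < |u x|} ^ ((n - 1 : ℝ) / δ) ≤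
        ENNReal.ofReal (C / t * A ^ (n / δ)) := by
    intro A hA
    have hA0 : 0 < A := lt_of_le_of_lt (by positivity) hA
    have hA' : 4 * K < ENNReal.ofReal A := by
      rw [← ENNReal.ofReal_toReal hKtop, ← ENNReal.ofReal_ofNat 4,
        ← ENNReal.ofReal_mul (by norm_num)]
      exact (ENNReal.ofReal_lt_ofReal_iff hA0).2 hA
    obtain ⟨c, r, a, hr, hF, hsum⟩ := exists_ball_domination (by omega) hδ
      (fun y => norm_nonneg (fderiv ℝ u y)) hvanish hA'
    simp only [ofReal_norm] at hF
    refine le_trans ?_ (hc_superlevel_rpow_le hn hδ hδn hu hcs hr hF hA0 hsum ht)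
    exact ENNReal.rpow_le_rpow (hc_mono fun x hx => hx.2) (by positivity)
  have hcont : Continuous fun A : ℝ => ENNReal.ofReal (C / t * A ^ ((n:ℝ) / δ)) :=
    ENNReal.continuous_ofReal.comp (continuous_const.mul (Real.continuous_rpow_const hq.le))
  have hlim := ge_of_tendsto ((hcont.tendsto (4 * K.toReal)).mono_left
    (nhdsWithin_le_nhds (s := Ioi _))) (Filter.eventually_of_mem self_mem_nhdsWithin hbound)
  refine hlim.trans_eq ?_
  rw [← ENNReal.ofReal_div_of_pos ht]
  conv_rhs => rw [← ENNReal.ofReal_toReal hKtop]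
  rw [ENNReal.ofReal_rpow_of_nonneg ENNReal.toReal_nonneg hq.le,
    ← ENNReal.ofReal_mul (by positivity), Real.mul_rpow (by norm_num) ENNReal.toReal_nonneg]
  congr 1
  ring
end
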